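/- arXiv:1503.02487 — 2 statements merged into one kernel-verified Lean document; each statement's English description precedes it below -/
import Mathlib

section
/- For all indices 0 ≤ i ≤ n−1 and i ≤ j ≤ n+1, one has q̄_j·q_i − q_j·q̄_i = d·(q̄_{X_i})_{j−i}. -/
/-!
Let `K` be the solution of the recurrence `x (m + 2) = c (m + 1) * x (m + 1) - x m` of the `q_m`
with initial values `0, 1`. It satisfies `q * K m ≡ q_m (mod d)`, and it increases strictly from `0`
to `K (n + 1) = d`, the latter because the Casoratian `K (m + 1) * q_m - K m * q_{m+1}` is constant.
Solutions of the congruence being unique modulo `d`, the least positive one is `K m`, that is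
`q̄_m = K m`. The same holds for `X_i`, whose data are those of `X` shifted by `i`.

For fixed `i`, the sequence `m ↦ q̄_{i+m} * q_i - q_{i+m} * q̄_i` solves the shifted recurrence,
starts with `0` and continues with the Casoratian, which is `d`; so it is `d` times the solution
with initial values `0, 1`, which is `(q̄_{X_i})_m`.
-/

/-- The second-order recurrence of Hirzebruch–Jung continued fractions with coefficients
`c 1, …, c N`, for the values `a 0, …, a (N + 1)`. -/
def IsHJSolution {R : Type*} [CommRing R] (c a : ℕ → R) (N : ℕ) : Prop :=
  ∀ m < N, a m = c (m + 1) * a (m + 1) - a (m + 2)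

/-- The solution of the Hirzebruch–Jung recurrence with initial values `0, 1`. For `m ≥ 1` it is the
continuant of `c 1, …, c (m - 1)`. -/
def hjContinuant {R : Type*} [CommRing R] (c : ℕ → R) : ℕ → R
  | 0 => 0
  | 1 => 1
  | m + 2 => c (m + 1) * hjContinuant c (m + 1) - hjContinuant c m

section Recurrence

variable {R : Type*} [CommRing R] {c a b : ℕ → R} {N : ℕ}

theorem isHJSolution_hjContinuant (c : ℕ → R) (N : ℕ) : IsHJSolution c (hjContinuant c) N :=
  fun _ _ => (sub_sub_cancel _ _).symm

namespace IsHJSolution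

theorem shift {i : ℕ} (ha : IsHJSolution c a (i + N)) :
    IsHJSolution (fun k => c (i + k)) (fun k => a (i + k)) N :=
  fun m hm => ha (i + m) (by omega)

theorem mul_const_sub_mul_const (ha : IsHJSolution c a N) (hb : IsHJSolution c b N) (r s : R) :
    IsHJSolution c (fun m => a m * r - b m * s) N := by
  intro m hm
  linear_combination r * ha m hm - s * hb m hm

theorem casoratian_eq (ha : IsHJSolution c a N) (hb : IsHJSolution c b N) {m : ℕ} (hm : m ≤ N) :
    a (m + 1) * b m - a m * b (m + 1) = a 1 * b 0 - a 0 * b 1 := by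
  induction m with
  | zero => rfl
  | succ k ih =>
    linear_combination ih (by omega) + b (k + 1) * ha k hm - a (k + 1) * hb k hm

theorem apply_succ_eq (ha : IsHJSolution c a N) {m : ℕ} (hm : m ≤ N) :
    a (m + 1) = a 1 * hjContinuant c (m + 1) - a 0 * hjContinuant (fun k => c (k + 1)) m := by
  induction m using Nat.twoStepInduction with
  | zero => simp [hjContinuant]
  | one =>
    simp only [hjContinuant]
    linear_combination ha 0 hm
  | more k ih₀ ih₁ =>
    simp only [hjContinuant] at ih₁ ⊢
    linear_combination c (k + 2) * ih₁ (by omega) - ih₀ (by omega) + ha (k + 1) hm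

theorem eq_mul_hjContinuant (ha : IsHJSolution c a N) (h₀ : a 0 = 0) {m : ℕ} (hm : m ≤ N + 1) :
    a m = a 1 * hjContinuant c m := by
  cases m with
  | zero => simp [h₀, hjContinuant]
  | succ k => rw [ha.apply_succ_eq (by omega), h₀, zero_mul, sub_zero]

theorem dvd_mul_hjContinuant_sub (ha : IsHJSolution c a N) {m : ℕ} (hm : m ≤ N + 1) :
    a 0 ∣ a 1 * hjContinuant c m - a m := by
  cases m with
  | zero => simp [hjContinuant]
  | succ k =>
    exact ⟨hjContinuant (fun k => c (k + 1)) k, by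
      linear_combination -ha.apply_succ_eq (Nat.le_of_succ_le_succ hm)⟩

theorem hjContinuant_cross {i : ℕ} (ha : IsHJSolution c a (i + N)) {m : ℕ} (hm : m ≤ N + 1) :
    hjContinuant c (i + m) * a i - a (i + m) * hjContinuant c i =
      a 0 * hjContinuant (fun k => c (i + k)) m := by
  have hK := isHJSolution_hjContinuant c (i + N)
  have hcas : hjContinuant c (i + 1) * a i - a (i + 1) * hjContinuant c i = a 0 := by
    have h := hK.casoratian_eq ha (Nat.le_add_right i N)
    simp only [hjContinuant] at h
    linear_combination h
  have hcross := hK.shift.mul_const_sub_mul_const ha.shift (a i) (hjContinuant c i)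
  have h := hcross.eq_mul_hjContinuant (by simp only [add_zero]; ring) hm
  rwa [hcas] at h

theorem strictMonoOn [LinearOrder R] [IsStrictOrderedRing R] (ha : IsHJSolution c a N)
    (hc : ∀ m < N, 2 ≤ c (m + 1)) (h₀ : 0 ≤ a 0) (h₁ : a 0 < a 1) :
    StrictMonoOn a (Set.Iic (N + 1)) := by
  have hstep : ∀ m ≤ N, 0 ≤ a m ∧ a m < a (m + 1) := by
    intro m hm
    induction m with
    | zero => exact ⟨h₀, h₁⟩
    | succ k ih =>
      obtain ⟨hk, hlt⟩ := ih (by omega)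
      have hpos : 0 ≤ a (k + 1) := hk.trans hlt.le
      have hmul : 2 * a (k + 1) ≤ c (k + 1) * a (k + 1) :=
        mul_le_mul_of_nonneg_right (hc k hm) hpos
      exact ⟨hpos, by linarith [ha k hm]⟩
  exact strictMonoOn_Iic_of_lt_succ fun m hm => (hstep m (by omega)).2

end IsHJSolution

end Recurrence

theorem isLeast_pos_dvd_mul_sub {d q r x : ℤ} (hdq : IsCoprime d q) (hx : 0 < x) (hxd : x < d)
    (hdvd : d ∣ q * x - r) : IsLeast {t : ℤ | 0 < t ∧ d ∣ q * t - r} x := by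
  refine ⟨⟨hx, hdvd⟩, fun t ⟨ht, htdvd⟩ => ?_⟩
  by_contra! hlt
  have hdiff : d ∣ x - t := by
    refine hdq.dvd_of_dvd_mul_left ?_
    simpa only [sub_sub_sub_cancel_right, ← mul_sub] using hdvd.sub htdvd
  linarith [Int.le_of_dvd (by linarith) hdiff]

/-- The Hirzebruch–Jung data of `a 0 / a 1`: the remainders are `a 0, …, a (N + 1)` and the partial
quotients are `c 1, …, c N`. -/
structure IsHJData (c a : ℕ → ℤ) (N : ℕ) : Prop where
  isHJSolution : IsHJSolution c a N
  two_le : ∀ m < N, 2 ≤ c (m + 1)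
  apply_last : a N = 1
  apply_last_succ : a (N + 1) = 0

/-- The `q̄`-data `b 0, …, b (N + 1)` of a quotient singularity with remainders `a 0, …, a (N + 1)`,
including the boundary conventions. -/
structure IsQbarData (a b : ℕ → ℤ) (N : ℕ) : Prop where
  apply_zero : b 0 = 0
  apply_last_succ : b (N + 1) = a 0
  isLeast : ∀ m, 1 ≤ m → m ≤ N → IsLeast {t : ℤ | 0 < t ∧ a 0 ∣ a 1 * t - a m} (b m)

namespace IsHJData

variable {c a b : ℕ → ℤ} {N : ℕ}

theorem shift {i : ℕ} (h : IsHJData c a (i + N)) :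
    IsHJData (fun k => c (i + k)) (fun k => a (i + k)) N where
  isHJSolution := h.isHJSolution.shift
  two_le m hm := h.two_le (i + m) (by omega)
  apply_last := h.apply_last
  apply_last_succ := h.apply_last_succ

theorem hjContinuant_last_succ (h : IsHJData c a N) : hjContinuant c (N + 1) = a 0 := by
  simpa [h.apply_last, h.apply_last_succ, hjContinuant] using
    (isHJSolution_hjContinuant c N).casoratian_eq h.isHJSolution le_rfl

theorem isCoprime (h : IsHJData c a N) : IsCoprime (a 0) (a 1) := by
  obtain ⟨k, hk⟩ := h.isHJSolution.dvd_mul_hjContinuant_sub N.le_succ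
  rw [h.apply_last] at hk
  exact ⟨-k, hjContinuant c N, by linear_combination hk⟩

theorem strictMonoOn_hjContinuant (h : IsHJData c a N) :
    StrictMonoOn (hjContinuant c) (Set.Iic (N + 1)) :=
  (isHJSolution_hjContinuant c N).strictMonoOn h.two_le le_rfl zero_lt_one

theorem isQbarData_hjContinuant (h : IsHJData c a N) : IsQbarData a (hjContinuant c) N where
  apply_zero := rfl
  apply_last_succ := h.hjContinuant_last_succ
  isLeast m hm hmN := by
    have hpos : hjContinuant c 0 < hjContinuant c m :=
      h.strictMonoOn_hjContinuant (Nat.zero_le _) (Nat.le_succ_of_le hmN) hm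
    have hlt : hjContinuant c m < hjContinuant c (N + 1) :=
      h.strictMonoOn_hjContinuant (Nat.le_succ_of_le hmN) Set.self_mem_Iic (Nat.lt_succ_of_le hmN)
    rw [h.hjContinuant_last_succ] at hlt
    exact isLeast_pos_dvd_mul_sub h.isCoprime hpos hlt
      (h.isHJSolution.dvd_mul_hjContinuant_sub (Nat.le_succ_of_le hmN))

end IsHJData

namespace IsQbarData

variable {a b b' c x : ℕ → ℤ} {N : ℕ}

theorem unique (h : IsQbarData a b N) (h' : IsQbarData a b' N) {m : ℕ} (hm : m ≤ N + 1) :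
    b m = b' m := by
  rcases Nat.eq_zero_or_pos m with rfl | hpos
  · rw [h.apply_zero, h'.apply_zero]
  rcases Nat.le_succ_iff.mp hm with hmN | rfl
  · exact (h.isLeast m hpos hmN).unique (h'.isLeast m hpos hmN)
  · rw [h.apply_last_succ, h'.apply_last_succ]

theorem cross_eq {i : ℕ} (hb : IsQbarData a b (i + N)) (hx : IsQbarData (fun k => a (i + k)) x N)
    (h : IsHJData c a (i + N)) {m : ℕ} (hm : m ≤ N + 1) :
    b (i + m) * a i - a (i + m) * b i = a 0 * x m := by
  have hbK {k : ℕ} (hk : k ≤ i + N + 1) : b k = hjContinuant c k :=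
    hb.unique h.isQbarData_hjContinuant hk
  rw [hbK (by omega), hbK (by omega), hx.unique h.shift.isQbarData_hjContinuant hm]
  exact h.isHJSolution.hjContinuant_cross hm

end IsQbarData

/-- **Hirzebruch–Jung data** of `d/q` for coprime `d > q ≥ 1`:
`q_0 = d > q_1 = q > ⋯ > q_n = 1 > q_{n+1} = 0`, `c_i ≥ 2` with
`q_{i-1} = c_i q_i − q_{i+1}`; `q̄_i` is the smallest positive integer with
`q·q̄_i ≡ q_i (mod d)` (and `q̄_0 = 0`, `q̄_{n+1} = d`).
For `0 ≤ i ≤ n−1`, `(q̄_{X_i})_0 = 0`, for `1 ≤ m ≤ n−i` the number `(q̄_{X_i})_m`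
is the smallest positive integer `t` with `q_{i+1}·t ≡ q_{i+m} (mod q_i)`, and
`(q̄_{X_i})_{n+1−i} = q_i` (the `q̄`-data of `X_i = X(q_i;1,q_{i+1})`).

**Statement:** for all `0 ≤ i ≤ n−1` and `i ≤ j ≤ n+1`,
`q̄_j·q_i − q_j·q̄_i = d·(q̄_{X_i})_{j−i}`. -/
theorem qbar_cross_identity
    (n : ℕ) (d q : ℤ) (Q C Qbar : ℕ → ℤ) (QbarX : ℕ → ℕ → ℤ)
    (hn : 1 ≤ n) (hq1 : 1 ≤ q) (hqd : q < d) (hcop : Int.gcd d q = 1)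
    (hQ0 : Q 0 = d) (hQ1 : Q 1 = q) (hQn : Q n = 1) (hQtop : Q (n + 1) = 0)
    (hQdec : ∀ i, i ≤ n → Q (i + 1) < Q i)
    (hC : ∀ i, 1 ≤ i → i ≤ n → Q (i - 1) = C i * Q i - Q (i + 1))
    (hC2 : ∀ i, 1 ≤ i → i ≤ n → 2 ≤ C i)
    (hQbar0 : Qbar 0 = 0) (hQbarTop : Qbar (n + 1) = d)
    (hQbarPos : ∀ i, 1 ≤ i → i ≤ n → 0 < Qbar i)
    (hQbarCong : ∀ i, 1 ≤ i → i ≤ n → d ∣ q * Qbar i - Q i)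
    (hQbarMin : ∀ i, 1 ≤ i → i ≤ n → ∀ t : ℤ, 0 < t → d ∣ q * t - Q i → Qbar i ≤ t)
    (hX0 : ∀ i, i + 1 ≤ n → QbarX i 0 = 0)
    (hXtop : ∀ i, i + 1 ≤ n → QbarX i (n + 1 - i) = Q i)
    (hXpos : ∀ i m, i + 1 ≤ n → 1 ≤ m → m ≤ n - i → 0 < QbarX i m)
    (hXcong : ∀ i m, i + 1 ≤ n → 1 ≤ m → m ≤ n - i →
      Q i ∣ Q (i + 1) * QbarX i m - Q (i + m))
    (hXmin : ∀ i m, i + 1 ≤ n → 1 ≤ m → m ≤ n - i →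
      ∀ t : ℤ, 0 < t → Q i ∣ Q (i + 1) * t - Q (i + m) → QbarX i m ≤ t) :
    ∀ i j, i + 1 ≤ n → i ≤ j → j ≤ n + 1 →
      Qbar j * Q i - Q j * Qbar i = d * QbarX i (j - i) := by
  intro i j hi hij hj
  obtain ⟨N, rfl⟩ : ∃ N, n = i + N := Nat.exists_eq_add_of_le (by omega)
  obtain ⟨m, rfl⟩ := Nat.exists_eq_add_of_le hij
  subst hQ0 hQ1
  have hHJ : IsHJData C Q (i + N) :=
    { isHJSolution := fun k hk => hC (k + 1) (by omega) hk
      two_le := fun k hk => hC2 (k + 1) (by omega) hk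
      apply_last := hQn
      apply_last_succ := hQtop }
  have hQbar : IsQbarData Q Qbar (i + N) :=
    ⟨hQbar0, hQbarTop, fun k hk₁ hk =>
      ⟨⟨hQbarPos k hk₁ hk, hQbarCong k hk₁ hk⟩, fun t ht => hQbarMin k hk₁ hk t ht.1 ht.2⟩⟩
  have hXlast : QbarX i (N + 1) = Q i := by
    simpa only [add_assoc, Nat.add_sub_cancel_left] using hXtop i hi
  have hQbarX : IsQbarData (fun k => Q (i + k)) (QbarX i) N :=
    ⟨hX0 i hi, hXlast, fun k hk₁ hk =>
      have hk' : k ≤ i + N - i := by omega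
      ⟨⟨hXpos i k hi hk₁ hk', hXcong i k hi hk₁ hk'⟩,
        fun t ht => hXmin i k hi hk₁ hk' t ht.1 ht.2⟩⟩
  rw [Nat.add_sub_cancel_left]
  exact hQbar.cross_eq hQbarX hHJ (by omega)
end

section
/- Let 0 < k < d with greedy X-decomposition (k_1, …, k_n), let r := min{i : k_i ≠ 0} and s := max{i : k_i ≠ 0}, and assume r < s. Set w := d − 1 − q and let k' be the residue of k + w modulo d, with greedy X-decomposition (ℓ_1, …, ℓ_n). Then: ℓ_i = c_i − 2 for 1 ≤ i ≤ r−2; ℓ_{r−1} = c_{r−1} − 1 (when r ≥ 2); ℓ_r = k_r − 1; ℓ_i = k_i for r < i < s; ℓ_s = k_s − 1; ℓ_{s+1} = c_{s+1} − 1 (when s ≤ n−1); and ℓ_i = c_i − 2 for s+2 ≤ i ≤ n. -/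
/-!
Compare the greedy remainders `ρ i` of `k` with the remainders `ρ' i` of the residue of `k + w`,
starting from `ρ' 0 ≡ ρ 0 + (Q 0 - Q 1 - 1)`. Uniqueness of division with remainder by `Q (i + 1)`
turns the offset `ρ' i - ρ i` into the difference of the `(i + 1)`-st digits and the next offset.
By the recursion for `Q`, only four offsets occur:

* `Q i - Q (i + 1) - 1` for `i ≤ r - 2`, while the digits of `k` are zero;
* `-Q r - 1` at `i = r - 1`, since `Q r < ρ (r - 1)` forces a borrow;
* `-1` for `r ≤ i < s`, while `ρ` stays positive;
* `Q s - 1` at `i = s`, where `ρ` vanishes and a second borrow takes place;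

and for `i > s` the first offset recurs.
-/

/-- The remainders of the greedy change-making algorithm for the coin system
`Q 0, Q 1, …`: `r_0 = k % Q 0` and `r_{i+1} = r_i % Q (i+1)`. -/
def hjRem (Q : ℕ → ℤ) (k : ℤ) : ℕ → ℤ
  | 0 => k % Q 0
  | i + 1 => hjRem Q k i % Q (i + 1)

/-- The greedy digits for the coin system `Q 0, Q 1, …`:
`g_0 = ⌊k / Q 0⌋` and `g_{i+1} = ⌊r_i / Q (i+1)⌋`.  For `0 ≤ k < d = Q 0`
the digits at indices `1, …, n` form the greedy `X`-decomposition of `k`. -/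
def hjGreedy (Q : ℕ → ℤ) (k : ℤ) : ℕ → ℤ
  | 0 => k / Q 0
  | i + 1 => hjRem Q k i / Q (i + 1)

/-- The residue `k'` of `k + w` modulo `d`, where `d = Q 0`, `q = Q 1` and `w = d - 1 - q`. -/
def hjAddW (Q : ℕ → ℤ) (k : ℤ) : ℤ :=
  (k + (Q 0 - 1 - Q 1)) % Q 0

/-- The difference of the remainders of `k'` and `k` at index `i` when no borrow is pending; at
`i = 0` it is `w`. -/
def gapOffset (Q : ℕ → ℤ) (i : ℕ) : ℤ :=
  Q i - Q (i + 1) - 1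

/-- The difference of the remainders of `k'` and `k` at the index `i` just before the first nonzero
digit of `k`: `gapOffset` lowered by one multiple of `Q i`. -/
def borrowOffset (Q : ℕ → ℤ) (i : ℕ) : ℤ :=
  -Q (i + 1) - 1

/-- The difference of the remainders of `k'` and `k` at the index `i` of the last nonzero digit of
`k`: the preceding offset `-1` raised by one multiple of `Q i`. -/
def fullOffset (Q : ℕ → ℤ) (i : ℕ) : ℤ :=
  Q i - 1

section Remainders

variable {Q : ℕ → ℤ} {k m : ℤ} {i j : ℕ}

lemma hjRem_eq_hjGreedy_mul_add (Q : ℕ → ℤ) (k : ℤ) (i : ℕ) :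
    hjRem Q k i = hjGreedy Q k (i + 1) * Q (i + 1) + hjRem Q k (i + 1) :=
  (Int.ediv_mul_add_emod (hjRem Q k i) (Q (i + 1))).symm

lemma hjRem_nonneg (h : Q i ≠ 0) : 0 ≤ hjRem Q k i := by
  cases i <;> exact Int.emod_nonneg _ h

lemma hjRem_lt (h : 0 < Q i) : hjRem Q k i < Q i := by
  cases i <;> exact Int.emod_lt_of_pos _ h

lemma hjRem_eq_of_hjGreedy_eq_zero (hij : i ≤ j)
    (hzero : ∀ l, i < l → l ≤ j → hjGreedy Q k l = 0) : hjRem Q k i = hjRem Q k j := by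
  induction j, hij using Nat.le_induction with
  | base => rfl
  | succ j hij ih =>
    rw [ih fun l hil hlj => hzero l hil (by omega), hjRem_eq_hjGreedy_mul_add,
      hzero (j + 1) (by omega) le_rfl, zero_mul, zero_add]

lemma hjGreedy_succ_nonneg (hQi : Q i ≠ 0) (hQ : 0 ≤ Q (i + 1)) : 0 ≤ hjGreedy Q k (i + 1) :=
  Int.ediv_nonneg (hjRem_nonneg hQi) hQ

lemma hjRem_le_hjRem (hij : i ≤ j) (hQ : ∀ l, i ≤ l → l ≤ j → 0 < Q l) :
    hjRem Q k j ≤ hjRem Q k i := by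
  induction j, hij using Nat.le_induction with
  | base => rfl
  | succ j hij ih =>
    have hpos : 0 < Q (j + 1) := hQ (j + 1) (by omega) le_rfl
    calc hjRem Q k (j + 1)
        ≤ hjGreedy Q k (j + 1) * Q (j + 1) + hjRem Q k (j + 1) :=
          le_add_of_nonneg_left
            (mul_nonneg (hjGreedy_succ_nonneg (hQ j hij (by omega)).ne' hpos.le) hpos.le)
      _ = hjRem Q k j := (hjRem_eq_hjGreedy_mul_add Q k j).symm
      _ ≤ hjRem Q k i := ih fun l hil hlj => hQ l hil (by omega)

lemma hjRem_lt_of_hjGreedy_eq_zero (hQ : 0 < Q (i + 1)) (hzero : hjGreedy Q k (i + 1) = 0) :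
    hjRem Q k i < Q (i + 1) := by
  rw [hjRem_eq_hjGreedy_mul_add, hzero, zero_mul, zero_add]
  exact hjRem_lt hQ

lemma hjGreedy_succ_eq_zero (h : hjRem Q k i = 0) : hjGreedy Q k (i + 1) = 0 := by
  rw [hjGreedy, h, Int.zero_ediv]

lemma hjRem_pos_of_hjGreedy_ne_zero (hQ : Q i ≠ 0) (hne : hjGreedy Q k (i + 1) ≠ 0) :
    0 < hjRem Q k i :=
  (hjRem_nonneg hQ).lt_of_ne' (mt hjGreedy_succ_eq_zero hne)

lemma lt_hjRem_of_hjGreedy_ne_zero (hQi : Q i ≠ 0) (hQ : 0 < Q (i + 1))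
    (hne : hjGreedy Q k (i + 1) ≠ 0) (hpos : 0 < hjRem Q k (i + 1)) :
    Q (i + 1) < hjRem Q k i := by
  have hdigit : 0 < hjGreedy Q k (i + 1) :=
    (hjGreedy_succ_nonneg hQi hQ.le).lt_of_ne' hne
  calc Q (i + 1) ≤ hjGreedy Q k (i + 1) * Q (i + 1) := le_mul_of_one_le_left hQ.le hdigit
    _ < hjGreedy Q k (i + 1) * Q (i + 1) + hjRem Q k (i + 1) := lt_add_of_pos_right _ hpos
    _ = hjRem Q k i := (hjRem_eq_hjGreedy_mul_add Q k i).symm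

lemma hjGreedy_and_hjRem_succ_of_offset {a e e' : ℤ} (h : hjRem Q m i = hjRem Q k i + e)
    (he : e = a * Q (i + 1) + e') (hnonneg : 0 ≤ hjRem Q k (i + 1) + e')
    (hlt : hjRem Q k (i + 1) + e' < Q (i + 1)) :
    hjGreedy Q m (i + 1) = hjGreedy Q k (i + 1) + a ∧
      hjRem Q m (i + 1) = hjRem Q k (i + 1) + e' := by
  refine (Int.ediv_emod_unique (hnonneg.trans_lt hlt)).2 ⟨?_, hnonneg, hlt⟩
  rw [h, he, hjRem_eq_hjGreedy_mul_add Q k i]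
  ring

lemma hjGreedy_and_hjRem_succ_of_borrowOffset (hQ : 0 < Q (i + 1))
    (h : hjRem Q m i = hjRem Q k i + borrowOffset Q i) (hpos : 0 < hjRem Q k (i + 1)) :
    hjGreedy Q m (i + 1) = hjGreedy Q k (i + 1) - 1 ∧
      hjRem Q m (i + 1) = hjRem Q k (i + 1) - 1 := by
  have hrem : hjRem Q k (i + 1) < Q (i + 1) := hjRem_lt hQ
  rw [borrowOffset] at h
  apply hjGreedy_and_hjRem_succ_of_offset h <;> linarith

lemma hjGreedy_and_hjRem_succ_of_sub_one_of_pos (hQ : 0 < Q (i + 1))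
    (h : hjRem Q m i = hjRem Q k i - 1) (hpos : 0 < hjRem Q k (i + 1)) :
    hjGreedy Q m (i + 1) = hjGreedy Q k (i + 1) ∧
      hjRem Q m (i + 1) = hjRem Q k (i + 1) - 1 := by
  have hrem : hjRem Q k (i + 1) < Q (i + 1) := hjRem_lt hQ
  rw [← add_zero (hjGreedy Q k (i + 1))]
  apply hjGreedy_and_hjRem_succ_of_offset h <;> linarith

lemma hjGreedy_and_hjRem_succ_of_sub_one_of_eq_zero (hQ : 0 < Q (i + 1))
    (h : hjRem Q m i = hjRem Q k i - 1) (hzero : hjRem Q k (i + 1) = 0) :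
    hjGreedy Q m (i + 1) = hjGreedy Q k (i + 1) - 1 ∧
      hjRem Q m (i + 1) = hjRem Q k (i + 1) + fullOffset Q (i + 1) := by
  apply hjGreedy_and_hjRem_succ_of_offset h <;> rw [fullOffset] <;> linarith

lemma hjRem_eq_sub_one (hij : i ≤ j) (hQ : ∀ l, i < l → l ≤ j → 0 < Q l)
    (h : hjRem Q m i = hjRem Q k i - 1) (hpos : ∀ l, i < l → l ≤ j → 0 < hjRem Q k l) :
    hjRem Q m j = hjRem Q k j - 1 := by
  induction j, hij using Nat.le_induction with
  | base => exact h
  | succ j hij ih =>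
    have hprev := ih (fun l hil hlj => hQ l hil (by omega)) fun l hil hlj => hpos l hil (by omega)
    exact (hjGreedy_and_hjRem_succ_of_sub_one_of_pos (hQ (j + 1) (by omega) le_rfl) hprev
      (hpos (j + 1) (by omega) le_rfl)).2

end Remainders

/-- The part of Hirzebruch–Jung data that governs the digits up to index `n`: a decreasing chain
`Q 0 > ⋯ > Q (n + 1) ≥ 0` satisfying the continued fraction recursion. It is not required to
end in `Q n = 1` and `Q (n + 1) = 0`. -/
structure IsHJChain (n : ℕ) (Q C : ℕ → ℤ) : Prop where
  last_nonneg : 0 ≤ Q (n + 1)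
  succ_lt : ∀ i, i ≤ n → Q (i + 1) < Q i
  recursion : ∀ i, i < n → Q i = C (i + 1) * Q (i + 1) - Q (i + 2)

namespace IsHJChain

variable {n : ℕ} {Q C : ℕ → ℤ} {k m : ℤ} {i j r s : ℕ}

lemma nonneg (hQ : IsHJChain n Q C) (hi : i ≤ n + 1) : 0 ≤ Q i := by
  induction hi using Nat.decreasingInduction with
  | self => exact hQ.last_nonneg
  | of_succ i hi ih => exact ih.trans (hQ.succ_lt i (by omega)).le

lemma pos (hQ : IsHJChain n Q C) (hi : i ≤ n) : 0 < Q i :=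
  (hQ.nonneg (by omega)).trans_lt (hQ.succ_lt i hi)

lemma hjRem_pos (hQ : IsHJChain n Q C) (hij : i ≤ j) (hj : j < n)
    (hne : hjGreedy Q k (j + 1) ≠ 0) : 0 < hjRem Q k i :=
  (hjRem_pos_of_hjGreedy_ne_zero (hQ.pos hj.le).ne' hne).trans_le
    (hjRem_le_hjRem hij fun _ _ hl => hQ.pos (by omega))

lemma hjRem_eq_zero (hQ : IsHJChain n Q C) (hij : i ≤ j) (hj : j ≤ n)
    (hi : hjRem Q k i = 0) : hjRem Q k j = 0 :=
  (hi ▸ hjRem_le_hjRem hij fun _ _ hl => hQ.pos (by omega)).antisymm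
    (hjRem_nonneg (hQ.pos hj).ne')

lemma hjGreedy_and_hjRem_succ_of_gapOffset_of_le (hQ : IsHJChain n Q C) (hi : i < n)
    (h : hjRem Q m i = hjRem Q k i + gapOffset Q i) (hle : hjRem Q k (i + 1) ≤ Q (i + 2)) :
    hjGreedy Q m (i + 1) = hjGreedy Q k (i + 1) + (C (i + 1) - 2) ∧
      hjRem Q m (i + 1) = hjRem Q k (i + 1) + gapOffset Q (i + 1) := by
  have hnonneg : 0 ≤ hjRem Q k (i + 1) := hjRem_nonneg (hQ.pos hi).ne'
  have hlt : Q (i + 2) < Q (i + 1) := hQ.succ_lt (i + 1) hi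
  apply hjGreedy_and_hjRem_succ_of_offset h <;> simp only [gapOffset]
  · linear_combination hQ.recursion i hi
  all_goals linarith

lemma hjGreedy_and_hjRem_succ_of_gapOffset_of_lt (hQ : IsHJChain n Q C) (hi : i < n)
    (h : hjRem Q m i = hjRem Q k i + gapOffset Q i) (hlt : Q (i + 2) < hjRem Q k (i + 1)) :
    hjGreedy Q m (i + 1) = hjGreedy Q k (i + 1) + (C (i + 1) - 1) ∧
      hjRem Q m (i + 1) = hjRem Q k (i + 1) + borrowOffset Q (i + 1) := by
  have hrem : hjRem Q k (i + 1) < Q (i + 1) := hjRem_lt (hQ.pos hi)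
  have hnonneg : 0 ≤ Q (i + 2) := hQ.nonneg (by omega)
  apply hjGreedy_and_hjRem_succ_of_offset h <;> simp only [gapOffset, borrowOffset]
  · linear_combination hQ.recursion i hi
  all_goals linarith

lemma hjGreedy_and_hjRem_succ_of_fullOffset (hQ : IsHJChain n Q C) (hi : i < n)
    (h : hjRem Q m i = hjRem Q k i + fullOffset Q i) (hle : hjRem Q k (i + 1) ≤ Q (i + 2)) :
    hjGreedy Q m (i + 1) = hjGreedy Q k (i + 1) + (C (i + 1) - 1) ∧
      hjRem Q m (i + 1) = hjRem Q k (i + 1) + gapOffset Q (i + 1) := by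
  have hnonneg : 0 ≤ hjRem Q k (i + 1) := hjRem_nonneg (hQ.pos hi).ne'
  have hlt : Q (i + 2) < Q (i + 1) := hQ.succ_lt (i + 1) hi
  apply hjGreedy_and_hjRem_succ_of_offset h <;> simp only [fullOffset, gapOffset]
  · linear_combination hQ.recursion i hi
  all_goals linarith

lemma hjRem_eq_add_gapOffset (hQ : IsHJChain n Q C) (hij : i ≤ j) (hj : j ≤ n)
    (h : hjRem Q m i = hjRem Q k i + gapOffset Q i)
    (hle : ∀ l, i < l → l ≤ j → hjRem Q k l ≤ Q (l + 1)) :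
    hjRem Q m j = hjRem Q k j + gapOffset Q j := by
  induction j, hij using Nat.le_induction with
  | base => exact h
  | succ j hij ih =>
    have hprev := ih (by omega) fun l hil hlj => hle l hil (by omega)
    exact (hQ.hjGreedy_and_hjRem_succ_of_gapOffset_of_le hj hprev (hle (j + 1) (by omega) le_rfl)).2

lemma hjRem_hjAddW_zero_of_le (hQ : IsHJChain n Q C) (hle : hjRem Q k 0 ≤ Q 1) :
    hjRem Q (hjAddW Q k) 0 = hjRem Q k 0 + gapOffset Q 0 := by
  have hnonneg : 0 ≤ k % Q 0 := Int.emod_nonneg _ (hQ.pos n.zero_le).ne'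
  have hlt : Q 1 < Q 0 := hQ.succ_lt 0 n.zero_le
  simp only [hjRem, hjAddW, gapOffset, Int.emod_emod] at hle ⊢
  rw [← Int.emod_add_emod, Int.emod_eq_of_lt] <;> linarith

lemma hjRem_hjAddW_zero_of_lt (hQ : IsHJChain n Q C) (hlt : Q 1 < hjRem Q k 0) :
    hjRem Q (hjAddW Q k) 0 = hjRem Q k 0 + borrowOffset Q 0 := by
  have hrem : k % Q 0 < Q 0 := Int.emod_lt_of_pos _ (hQ.pos n.zero_le)
  have hnonneg : 0 ≤ Q 1 := hQ.nonneg (by omega)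
  simp only [hjRem, hjAddW, borrowOffset, Int.emod_emod] at hlt ⊢
  rw [← Int.emod_add_emod, ← Int.sub_emod_right, Int.emod_eq_of_lt] <;> linarith

lemma hjRem_hjAddW_eq_add_gapOffset (hQ : IsHJChain n Q C) (hi : i ≤ n)
    (hle : ∀ l, l ≤ i → hjRem Q k l ≤ Q (l + 1)) :
    hjRem Q (hjAddW Q k) i = hjRem Q k i + gapOffset Q i :=
  hQ.hjRem_eq_add_gapOffset i.zero_le hi (hQ.hjRem_hjAddW_zero_of_le (hle 0 i.zero_le))
    fun l _ => hle l

lemma hjRem_hjAddW_eq_add_borrowOffset (hQ : IsHJChain n Q C) (hi : i ≤ n)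
    (hle : ∀ l, l < i → hjRem Q k l ≤ Q (l + 1)) (hlt : Q (i + 1) < hjRem Q k i) :
    hjRem Q (hjAddW Q k) i = hjRem Q k i + borrowOffset Q i := by
  cases i with
  | zero => exact hQ.hjRem_hjAddW_zero_of_lt hlt
  | succ i =>
    have hgap := hQ.hjRem_hjAddW_eq_add_gapOffset (i := i) (by omega) fun l hl => hle l (by omega)
    exact (hQ.hjGreedy_and_hjRem_succ_of_gapOffset_of_lt hi hgap hlt).2

lemma hjGreedy_hjAddW_of_le_first (hQ : IsHJChain n Q C) (hr1 : 1 ≤ r) (hrn : r ≤ n)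
    (hbelow : ∀ i, 1 ≤ i → i < r → hjGreedy Q k i = 0) (hKr : hjGreedy Q k r ≠ 0)
    (hpos : 0 < hjRem Q k r) :
    (∀ i, 1 ≤ i → i + 2 ≤ r → hjGreedy Q (hjAddW Q k) i = C i - 2) ∧
    (2 ≤ r → hjGreedy Q (hjAddW Q k) (r - 1) = C (r - 1) - 1) ∧
    (hjGreedy Q (hjAddW Q k) r = hjGreedy Q k r - 1) ∧
    hjRem Q (hjAddW Q k) r = hjRem Q k r - 1 := by
  obtain ⟨r, rfl⟩ := Nat.exists_eq_add_of_le' hr1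
  have hle (i : ℕ) (hi : i < r) : hjRem Q k i ≤ Q (i + 1) :=
    (hjRem_lt_of_hjGreedy_eq_zero (hQ.pos (by omega)) (hbelow (i + 1) (by omega) (by omega))).le
  have hlt : Q (r + 1) < hjRem Q k r :=
    lt_hjRem_of_hjGreedy_ne_zero (hQ.pos (by omega)).ne' (hQ.pos hrn) hKr hpos
  have hgap (i : ℕ) (hi : i < r) : hjRem Q (hjAddW Q k) i = hjRem Q k i + gapOffset Q i :=
    hQ.hjRem_hjAddW_eq_add_gapOffset (by omega) fun l hl => hle l (by omega)
  refine ⟨fun i hi hir => ?_, fun hr => ?_,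
    hjGreedy_and_hjRem_succ_of_borrowOffset (hQ.pos hrn)
      (hQ.hjRem_hjAddW_eq_add_borrowOffset (by omega) hle hlt) hpos⟩
  · obtain ⟨i, rfl⟩ := Nat.exists_eq_add_of_le' hi
    have hdigit := (hQ.hjGreedy_and_hjRem_succ_of_gapOffset_of_le (by omega) (hgap i (by omega))
      (hle (i + 1) (by omega))).1
    rwa [hbelow (i + 1) hi (by omega), zero_add] at hdigit
  · obtain ⟨r, rfl⟩ := Nat.exists_eq_add_of_le' (Nat.le_of_succ_le_succ hr)
    have hdigit := (hQ.hjGreedy_and_hjRem_succ_of_gapOffset_of_lt (by omega)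
      (hgap r r.lt_succ_self) hlt).1
    rwa [hbelow (r + 1) (by omega) (by omega), zero_add] at hdigit

lemma hjGreedy_of_sub_one (hQ : IsHJChain n Q C) (hrs : r < s) (hsn : s ≤ n)
    (hpred : hjRem Q m r = hjRem Q k r - 1) (hKs : hjGreedy Q k s ≠ 0) (hrem : hjRem Q k s = 0) :
    (∀ i, r < i → i < s → hjGreedy Q m i = hjGreedy Q k i) ∧
    (hjGreedy Q m s = hjGreedy Q k s - 1) ∧
    hjRem Q m s = hjRem Q k s + fullOffset Q s := by
  obtain ⟨s, rfl⟩ := Nat.exists_eq_add_of_le' (Nat.one_le_of_lt hrs)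
  have hpos (i : ℕ) (hi : i ≤ s) : 0 < hjRem Q k i := hQ.hjRem_pos hi hsn hKs
  have hsub (i : ℕ) (hri : r ≤ i) (hi : i ≤ s) : hjRem Q m i = hjRem Q k i - 1 :=
    hjRem_eq_sub_one hri (fun l _ hl => hQ.pos (by omega)) hpred fun l _ hl => hpos l (by omega)
  refine ⟨fun i hri hi => ?_, hjGreedy_and_hjRem_succ_of_sub_one_of_eq_zero (hQ.pos hsn)
    (hsub s (by omega) le_rfl) hrem⟩
  obtain ⟨i, rfl⟩ := Nat.exists_eq_add_of_le' (Nat.one_le_of_lt hri)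
  exact (hjGreedy_and_hjRem_succ_of_sub_one_of_pos (hQ.pos (by omega))
    (hsub i (by omega) (by omega)) (hpos (i + 1) (by omega))).1

lemma hjGreedy_of_fullOffset (hQ : IsHJChain n Q C)
    (hfull : hjRem Q m s = hjRem Q k s + fullOffset Q s) (hrem : hjRem Q k s = 0) :
    (s + 1 ≤ n → hjGreedy Q m (s + 1) = C (s + 1) - 1) ∧
    (∀ i, s + 2 ≤ i → i ≤ n → hjGreedy Q m i = C i - 2) := by
  have hzero (i : ℕ) (hsi : s ≤ i) (hi : i ≤ n) : hjRem Q k i = 0 := hQ.hjRem_eq_zero hsi hi hrem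
  have hle (i : ℕ) (hsi : s ≤ i) (hi : i ≤ n) : hjRem Q k i ≤ Q (i + 1) :=
    (hzero i hsi hi).trans_le (hQ.nonneg (by omega))
  have hstep (hs : s + 1 ≤ n) :=
    hQ.hjGreedy_and_hjRem_succ_of_fullOffset hs hfull (hle (s + 1) (by omega) hs)
  refine ⟨fun hs => ?_, fun i hsi hi => ?_⟩
  · simpa only [hjGreedy_succ_eq_zero hrem, zero_add] using (hstep hs).1
  · obtain ⟨i, rfl⟩ := Nat.exists_eq_add_of_le' (Nat.one_le_of_lt hsi)
    have hgap : hjRem Q m i = hjRem Q k i + gapOffset Q i :=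
      hQ.hjRem_eq_add_gapOffset (by omega) (by omega) (hstep (by omega)).2
        fun l hsl hl => hle l (by omega) (by omega)
    have hdigit :=
      (hQ.hjGreedy_and_hjRem_succ_of_gapOffset_of_le hi hgap (hle (i + 1) (by omega) hi)).1
    rwa [hjGreedy_succ_eq_zero (hzero i (by omega) (by omega)), zero_add] at hdigit

end IsHJChain

theorem greedy_decomposition_of_k_plus_w_general {n : ℕ} {Q C : ℕ → ℤ} (hQ : IsHJChain n Q C)
    (k : ℤ) (r s : ℕ) (hr1 : 1 ≤ r) (hsn : s ≤ n) (hrs : r < s)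
    (hKr : hjGreedy Q k r ≠ 0) (hKs : hjGreedy Q k s ≠ 0)
    (hbelow : ∀ i, 1 ≤ i → i < r → hjGreedy Q k i = 0) (hrem : hjRem Q k s = 0) :
    (∀ i, 1 ≤ i → i + 2 ≤ r → hjGreedy Q (hjAddW Q k) i = C i - 2) ∧
    (2 ≤ r → hjGreedy Q (hjAddW Q k) (r - 1) = C (r - 1) - 1) ∧
    (hjGreedy Q (hjAddW Q k) r = hjGreedy Q k r - 1) ∧
    (∀ i, r < i → i < s → hjGreedy Q (hjAddW Q k) i = hjGreedy Q k i) ∧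
    (hjGreedy Q (hjAddW Q k) s = hjGreedy Q k s - 1) ∧
    (s + 1 ≤ n → hjGreedy Q (hjAddW Q k) (s + 1) = C (s + 1) - 1) ∧
    (∀ i, s + 2 ≤ i → i ≤ n → hjGreedy Q (hjAddW Q k) i = C i - 2) := by
  have hpos : 0 < hjRem Q k r := by
    obtain ⟨s, rfl⟩ := Nat.exists_eq_add_of_le' (hr1.trans hrs.le)
    exact hQ.hjRem_pos (by omega) hsn hKs
  obtain ⟨hlead, hbefore_r, hat_r, hpred⟩ :=
    hQ.hjGreedy_hjAddW_of_le_first hr1 (by omega) hbelow hKr hpos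
  obtain ⟨hmiddle, hat_s, hfull⟩ := hQ.hjGreedy_of_sub_one hrs hsn hpred hKs hrem
  obtain ⟨hafter_s, htail⟩ := hQ.hjGreedy_of_fullOffset hfull hrem
  exact ⟨hlead, hbefore_r, hat_r, hmiddle, hat_s, hafter_s, htail⟩

/-- **Hirzebruch–Jung data** of `d/q` for coprime `d > q ≥ 1`:
`q_0 = d > q_1 = q > ⋯ > q_n = 1 > q_{n+1} = 0`, `c_i ≥ 2` with
`q_{i-1} = c_i q_i − q_{i+1}`.

**Statement:** let `0 < k < d` have greedy `X`-decomposition `(k_1, …, k_n)`,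
let `r = min{i : k_i ≠ 0}`, `s = max{i : k_i ≠ 0}` with `r < s`, set
`w := d − 1 − q`, and let `(ℓ_1, …, ℓ_n)` be the greedy `X`-decomposition of the
residue of `k + w` mod `d`.  Then `ℓ_i = c_i − 2` for `i ≤ r−2`;
`ℓ_{r−1} = c_{r−1} − 1` (if `r ≥ 2`); `ℓ_r = k_r − 1`; `ℓ_i = k_i` for
`r < i < s`; `ℓ_s = k_s − 1`; `ℓ_{s+1} = c_{s+1} − 1` (if `s ≤ n−1`); and
`ℓ_i = c_i − 2` for `s+2 ≤ i ≤ n`. -/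
theorem greedy_decomposition_of_k_plus_w
    (n : ℕ) (d q : ℤ) (Q C : ℕ → ℤ)
    (hn : 1 ≤ n) (hq1 : 1 ≤ q) (hqd : q < d) (hcop : Int.gcd d q = 1)
    (hQ0 : Q 0 = d) (hQ1 : Q 1 = q) (hQn : Q n = 1) (hQtop : Q (n + 1) = 0)
    (hQdec : ∀ i, i ≤ n → Q (i + 1) < Q i)
    (hC : ∀ i, 1 ≤ i → i ≤ n → Q (i - 1) = C i * Q i - Q (i + 1))
    (hC2 : ∀ i, 1 ≤ i → i ≤ n → 2 ≤ C i)
    (k : ℤ) (hk0 : 0 < k) (hkd : k < d)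
    (r s : ℕ) (hr1 : 1 ≤ r) (hsn : s ≤ n) (hrs : r < s)
    (hKr : hjGreedy Q k r ≠ 0) (hKs : hjGreedy Q k s ≠ 0)
    (hbelow : ∀ i, 1 ≤ i → i < r → hjGreedy Q k i = 0)
    (habove : ∀ i, s < i → i ≤ n → hjGreedy Q k i = 0) :
    (∀ i, 1 ≤ i → i + 2 ≤ r →
      hjGreedy Q ((k + (d - 1 - q)) % d) i = C i - 2) ∧
    (2 ≤ r → hjGreedy Q ((k + (d - 1 - q)) % d) (r - 1) = C (r - 1) - 1) ∧
    (hjGreedy Q ((k + (d - 1 - q)) % d) r = hjGreedy Q k r - 1) ∧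
    (∀ i, r < i → i < s →
      hjGreedy Q ((k + (d - 1 - q)) % d) i = hjGreedy Q k i) ∧
    (hjGreedy Q ((k + (d - 1 - q)) % d) s = hjGreedy Q k s - 1) ∧
    (s + 1 ≤ n → hjGreedy Q ((k + (d - 1 - q)) % d) (s + 1) = C (s + 1) - 1) ∧
    (∀ i, s + 2 ≤ i → i ≤ n →
      hjGreedy Q ((k + (d - 1 - q)) % d) i = C i - 2) := by
  subst hQ0 hQ1
  have hQ : IsHJChain n Q C := ⟨hQtop.ge, hQdec, fun i hi => hC (i + 1) (by omega) hi⟩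
  have hlast : hjRem Q k n = 0 := by
    have hnonneg : 0 ≤ hjRem Q k n := hjRem_nonneg (hQ.pos le_rfl).ne'
    have hlt : hjRem Q k n < Q n := hjRem_lt (hQ.pos le_rfl)
    omega
  exact greedy_decomposition_of_k_plus_w_general hQ k r s hr1 hsn hrs hKr hKs hbelow
    ((hjRem_eq_of_hjGreedy_eq_zero hsn habove).trans hlast)
end
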